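/- Let G be a distance-regular graph of diameter 3 with intersection array {k, b₁, b₂; 1, c₂, c₃}, with distinct adjacency eigenvalues k > θ₁ > θ₂ > θ₃, and let q be a real number with q ∈ {q₁, q₂, q₃} and either q > 0 or q ≤ −1. Then the q-distance matrix 𝔻_q has exactly three distinct eigenvalues. -/

import Mathlib

open Matrix

variable {V : Type*} [Fintype V] [DecidableEq V]

/-- The distance-`i` matrix of a graph: the `(x,y)` entry is 1 if `dist x y = i`, else 0. -/
noncomputable def distM (G : SimpleGraph V) (i : ℕ) : Matrix V V ℝ :=
  Matrix.of fun x y => if G.dist x y = i then (1 : ℝ) else 0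

/-- The `q`-distance matrix `𝔻_q = ∑_{i=1}^D (1 + 1/q + ⋯ + 1/q^{i-1}) • A_i`. -/
noncomputable def qDist (G : SimpleGraph V) (D : ℕ) (q : ℝ) : Matrix V V ℝ :=
  ∑ i ∈ Finset.Icc 1 D, (∑ j ∈ Finset.range i, (1 / q) ^ j) • distM G i

/-- `G` is distance-regular with diameter `D` and intersection numbers `b i`, `c i`
(with `c 1 = 1`): for any vertices `x, y` at distance `i ≤ D`, the number of neighbors
of `y` at distance `i - 1` from `x` is `c i` and the number of neighbors of `y` at
distance `i + 1` from `x` is `b i`. -/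
def IsDRG (G : SimpleGraph V) (D : ℕ) (b c : ℕ → ℕ) : Prop :=
  G.Connected ∧
  (∀ x y : V, G.dist x y ≤ D) ∧
  (∃ x y : V, G.dist x y = D) ∧
  c 1 = 1 ∧
  ∀ i ≤ D, ∀ x y : V, G.dist x y = i →
    ({z : V | G.Adj y z ∧ G.dist x z = i - 1} : Set V).ncard = c i ∧
    ({z : V | G.Adj y z ∧ G.dist x z = i + 1} : Set V).ncard = b i

/-- `a i = k - b i - c i` as a real number, where `k = b 0`. -/
noncomputable def aInt (b c : ℕ → ℕ) (i : ℕ) : ℝ := (b 0 : ℝ) - (b i : ℝ) - (c i : ℝ)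

open Classical in
/-- number of neighbours of x at distance i from y -/
noncomputable def nbr (G : SimpleGraph V) (x y : V) (i : ℕ) : ℝ :=
  ∑ z, if G.Adj x z ∧ G.dist y z = i then (1 : ℝ) else 0

lemma nbr_eq (G : SimpleGraph V) (x y : V) (i : ℕ) :
    nbr G x y i = (({z : V | G.Adj x z ∧ G.dist y z = i} : Set V).ncard : ℝ) := by
  classical
  unfold nbr
  rw [Set.ncard_eq_toFinset_card', Finset.sum_boole]
  congr 2
  ext z
  simp

lemma nbr_zero (G : SimpleGraph V) (hc : G.Connected) (x y : V) (i : ℕ)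
    (h : G.dist y x + 1 < i ∨ i + 1 < G.dist y x) : nbr G x y i = 0 := by
  classical
  unfold nbr
  apply Finset.sum_eq_zero
  intro z _
  rw [if_neg]
  rintro ⟨hz, hd⟩
  have e : G.dist x z = 1 := SimpleGraph.dist_eq_one_iff_adj.2 hz
  have t1 := hc.dist_triangle (u := y) (v := x) (w := z)
  have t2 := hc.dist_triangle (u := y) (v := z) (w := x)
  rw [G.dist_comm (u := z)] at t2
  omega

lemma distM_mul (G : SimpleGraph V) (x y : V) (i : ℕ) :
    (distM G 1 * distM G i) x y = nbr G x y i := by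
  classical
  rw [Matrix.mul_apply]
  unfold nbr distM
  refine Finset.sum_congr rfl fun z _ => ?_
  simp only [Matrix.of_apply, SimpleGraph.dist_eq_one_iff_adj, G.dist_comm (u := z)]
  by_cases h1 : G.Adj x z <;> by_cases h2 : G.dist y z = i <;> simp [h1, h2]

lemma nbr_total (G : SimpleGraph V) (b c : ℕ → ℕ) (hG : IsDRG G 3 b c) (x y : V) :
    nbr G x y 0 + nbr G x y 1 + nbr G x y 2 + nbr G x y 3 = b 0 := by
  classical
  obtain ⟨hc, hd, -, -, h⟩ := hG
  have h0 := (h 0 (by norm_num) x x (by simp)).2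
  have h0' : nbr G x x (0+1) = b 0 := by rw [nbr_eq, h0]
  rw [← h0']
  unfold nbr
  rw [← Finset.sum_add_distrib, ← Finset.sum_add_distrib, ← Finset.sum_add_distrib]
  refine Finset.sum_congr rfl fun z _ => ?_
  have hz := hd y z
  by_cases ha : G.Adj x z
  · have e : G.dist x z = 1 := SimpleGraph.dist_eq_one_iff_adj.2 ha
    generalize G.dist y z = d at hz
    interval_cases d <;> simp [ha, e]
  · simp [ha]

lemma nbr_bc (G : SimpleGraph V) (b c : ℕ → ℕ) (hG : IsDRG G 3 b c) (x y : V) (i : ℕ)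
    (hi : G.dist y x = i) :
    nbr G x y (i - 1) = c i ∧ nbr G x y (i + 1) = b i := by
  obtain ⟨hc, hd, -, -, h⟩ := hG
  have := h i (hi ▸ hd y x) y x hi
  rw [nbr_eq, nbr_eq, this.1, this.2]; simp

lemma mulAA (G : SimpleGraph V) (b c : ℕ → ℕ) (hG : IsDRG G 3 b c) :
    distM G 1 * distM G 1 = (b 0 : ℝ) • (1 : Matrix V V ℝ) + aInt b c 1 • distM G 1
      + (c 2 : ℝ) • distM G 2 := by
  ext x y
  rw [distM_mul]
  have ht := nbr_total G b c hG x y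
  have hz := nbr_zero G hG.1 x y
  obtain ⟨d, hd⟩ : ∃ d, G.dist y x = d := ⟨_, rfl⟩
  have hbc := nbr_bc G b c hG x y d hd
  have hle := hG.2.1 y x
  have hxy : x = y ↔ d = 0 := by
    rw [← hd, eq_comm]; exact (hG.1.dist_eq_zero_iff).symm
  have hc1 := hG.2.2.2.1
  simp only [Matrix.add_apply, Matrix.smul_apply, distM, Matrix.of_apply, Matrix.one_apply, hxy,
    G.dist_comm (u := x), hd, smul_eq_mul, aInt]
  rw [hd] at hle hz
  interval_cases d
  · simp at hbc ⊢; exact hbc.2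
  · have := hz 3 (by norm_num)
    simp at hbc ⊢; linarith [hbc.1, hbc.2]
  · simp at hbc ⊢; exact hbc.1
  · have := hz 1 (by norm_num)
    simpa using this

lemma mulAA2 (G : SimpleGraph V) (b c : ℕ → ℕ) (hG : IsDRG G 3 b c) :
    distM G 1 * distM G 2 = (b 1 : ℝ) • distM G 1 + aInt b c 2 • distM G 2
      + (c 3 : ℝ) • distM G 3 := by
  ext x y
  rw [distM_mul]
  have ht := nbr_total G b c hG x y
  have hz := nbr_zero G hG.1 x y
  obtain ⟨d, hd⟩ : ∃ d, G.dist y x = d := ⟨_, rfl⟩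
  have hbc := nbr_bc G b c hG x y d hd
  have hle := hG.2.1 y x
  simp only [Matrix.add_apply, Matrix.smul_apply, distM, Matrix.of_apply,
    G.dist_comm (u := x), hd, smul_eq_mul, aInt]
  rw [hd] at hle hz
  interval_cases d
  · have := hz 2 (by norm_num)
    simpa using this
  · simp at hbc ⊢; exact hbc.2
  · have := hz 0 (by norm_num)
    simp at hbc ⊢; linarith [hbc.1, hbc.2]
  · simp at hbc ⊢; exact hbc.1

/-- all-ones vector product -/
lemma sumA (G : SimpleGraph V) (b c : ℕ → ℕ) (hG : IsDRG G 3 b c) (v : V → ℝ) :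
    v + distM G 1 *ᵥ v + distM G 2 *ᵥ v + distM G 3 *ᵥ v = fun _ => ∑ y, v y := by
  have : (1 : Matrix V V ℝ) + distM G 1 + distM G 2 + distM G 3 = Matrix.of fun _ _ => 1 := by
    ext x y
    have hle := hG.2.1 x y
    have hxy : x = y ↔ G.dist x y = 0 := (hG.1.dist_eq_zero_iff).symm
    simp only [Matrix.add_apply, distM, Matrix.of_apply, Matrix.one_apply, hxy]
    generalize G.dist x y = d at *
    interval_cases d <;> simp
  have h := congrArg (· *ᵥ v) this
  simp only [Matrix.add_mulVec, Matrix.one_mulVec] at h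
  rw [h]
  ext x
  simp [Matrix.mulVec, dotProduct]

lemma A_one (G : SimpleGraph V) (b c : ℕ → ℕ) (hG : IsDRG G 3 b c) (x : V) :
    ∑ y, distM G 1 x y = b 0 := by
  rw [← (nbr_bc G b c hG x x 0 (by simp)).2]
  unfold nbr distM
  refine Finset.sum_congr rfl fun z _ => ?_
  by_cases h : G.Adj x z
  · have e : G.dist x z = 1 := SimpleGraph.dist_eq_one_iff_adj.2 h
    simp [h, e]
  · simp [h, SimpleGraph.dist_eq_one_iff_adj]

lemma distM_symm (G : SimpleGraph V) (i : ℕ) (x y : V) : distM G i x y = distM G i y x := by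
  simp [distM, G.dist_comm (u := x)]

lemma sum_mulVec (G : SimpleGraph V) (b c : ℕ → ℕ) (hG : IsDRG G 3 b c) (v : V → ℝ) :
    ∑ x, (distM G 1 *ᵥ v) x = b 0 * ∑ y, v y := by
  simp only [Matrix.mulVec, dotProduct]
  rw [Finset.sum_comm, Finset.mul_sum]
  refine Finset.sum_congr rfl fun y _ => ?_
  rw [← Finset.sum_mul, ← A_one G b c hG y]
  simp_rw [distM_symm G 1 y]

lemma max_const (G : SimpleGraph V) (hc : G.Connected) (M : Matrix V V ℝ) (r : ℝ)
    (h0 : ∀ x y, 0 ≤ M x y) (h1 : ∀ x y, G.Adj x y → 0 < M x y)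
    (hr : ∀ x, ∑ y, M x y = r) (v : V → ℝ) (hv : M *ᵥ v = r • v) :
    ∃ t, v = fun _ => t := by
  haveI := hc.nonempty
  obtain ⟨x0, -, hx0⟩ := Finset.exists_max_image Finset.univ v Finset.univ_nonempty
  have step : ∀ x y, G.Adj x y → v x = v x0 → v y = v x0 := by
    intro x y hxy hx
    have e := congrFun hv x
    simp only [Matrix.mulVec, dotProduct, Pi.smul_apply, smul_eq_mul] at e
    have s : ∑ y, M x y * (v x0 - v y) = 0 := by
      simp_rw [mul_sub]
      rw [Finset.sum_sub_distrib, ← Finset.sum_mul, hr, e, hx]; ring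
    have := (Finset.sum_eq_zero_iff_of_nonneg (fun y _ =>
      mul_nonneg (h0 x y) (sub_nonneg.2 (hx0 y (Finset.mem_univ _))))).1 s y (Finset.mem_univ _)
    rcases mul_eq_zero.1 this with h | h
    · exact absurd h (h1 x y hxy).ne'
    · linarith
  have walk : ∀ x y, G.Walk x y → v x = v x0 → v y = v x0 := by
    intro x y w
    induction w with
    | nil => exact id
    | cons h _ ih => exact fun hx => ih (step _ _ h hx)
  refine ⟨v x0, funext fun y => ?_⟩
  obtain ⟨w⟩ := hc.preconnected x0 y
  exact walk _ _ w rfl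

lemma mem_spec (M : Matrix V V ℝ) (μ : ℝ) :
    μ ∈ spectrum ℝ M ↔ ∃ v : V → ℝ, v ≠ 0 ∧ M *ᵥ v = μ • v := by
  rw [← Matrix.spectrum_toLin', ← Module.End.hasEigenvalue_iff_mem_spectrum]
  constructor
  · intro h
    obtain ⟨v, hv⟩ := h.exists_hasEigenvector
    exact ⟨v, hv.2, by simpa using hv.apply_eq_smul⟩
  · rintro ⟨v, h0, hv⟩
    exact Module.End.hasEigenvalue_of_hasEigenvector (x := v)
      ⟨Module.End.mem_eigenspace_iff.2 (by simpa using hv), h0⟩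

lemma spec_sub (A M : Matrix V V ℝ) (hA : A.IsHermitian) (hM : ∀ x y, M x y = M y x) (S : Set ℝ)
    (h : ∀ v : V → ℝ, v ≠ 0 → ∀ θ : ℝ, A *ᵥ v = θ • v → ∃ μ ∈ S, M *ᵥ v = μ • v) :
    spectrum ℝ M ⊆ S := by
  intro μ hμ
  obtain ⟨w, hw0, hw⟩ := (mem_spec M μ).1 hμ
  by_contra hS
  apply hw0
  have hMt : Mᵀ = M := by ext x y; simp [hM x y]
  have key : ∀ i, w ⬝ᵥ (hA.eigenvectorBasis i : V → ℝ) = 0 := by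
    intro i
    have hne : ((hA.eigenvectorBasis i : EuclideanSpace ℝ V) : V → ℝ) ≠ 0 := by
      intro h0
      have := hA.eigenvectorBasis.orthonormal.ne_zero i
      apply this
      ext x
      exact congrFun h0 x
    obtain ⟨m, hm, e⟩ := h _ hne _ (hA.mulVec_eigenvectorBasis i)
    have e1 := Matrix.dotProduct_mulVec w M (hA.eigenvectorBasis i : V → ℝ)
    rw [← Matrix.mulVec_transpose, hMt, hw, e, dotProduct_smul, smul_dotProduct, smul_eq_mul,
      smul_eq_mul] at e1
    have : (m - μ) * (w ⬝ᵥ (hA.eigenvectorBasis i : V → ℝ)) = 0 := by linarith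
    rcases mul_eq_zero.1 this with h | h
    · exact absurd (by rwa [← sub_eq_zero.1 h]) hS
    · exact h
  have : (WithLp.toLp 2 w : EuclideanSpace ℝ V) = 0 := by
    refine InnerProductSpace.ext_inner_left_basis (𝕜 := ℝ) hA.eigenvectorBasis.toBasis ?_
    intro i
    have := key i
    simp [EuclideanSpace.inner_eq_star_dotProduct, this]
  ext x
  exact congrArg (fun u : EuclideanSpace ℝ V => u x) this

lemma A2v (G : SimpleGraph V) (b c : ℕ → ℕ) (hG : IsDRG G 3 b c) (v : V → ℝ) (θ : ℝ)
    (hv : distM G 1 *ᵥ v = θ • v) (x : V) :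
    (c 2 : ℝ) * (distM G 2 *ᵥ v) x = (θ ^ 2 - aInt b c 1 * θ - b 0) * v x := by
  have h := congrArg (· *ᵥ v) (mulAA G b c hG)
  simp only [← Matrix.mulVec_mulVec, Matrix.add_mulVec, Matrix.smul_mulVec, Matrix.one_mulVec,
    hv, Matrix.mulVec_smul] at h
  have := congrFun h x
  simp only [Pi.add_apply, Pi.smul_apply, smul_eq_mul] at this
  linarith

lemma A3v (G : SimpleGraph V) (b c : ℕ → ℕ) (hG : IsDRG G 3 b c) (v : V → ℝ) (θ : ℝ)
    (hv : distM G 1 *ᵥ v = θ • v) (x : V) :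
    (c 2 : ℝ) * c 3 * (distM G 3 *ᵥ v) x =
      ((θ - aInt b c 2) * (θ ^ 2 - aInt b c 1 * θ - b 0) - b 1 * c 2 * θ) * v x := by
  have hcom : (distM G 1 * distM G 2) *ᵥ v = distM G 1 *ᵥ (distM G 2 *ᵥ v) := by
    rw [Matrix.mulVec_mulVec]
  have e2 : (c 2 : ℝ) • (distM G 2 *ᵥ v) = (θ ^ 2 - aInt b c 1 * θ - b 0) • v := by
    ext x; simpa using A2v G b c hG v θ hv x
  have h := congrArg (fun M => (c 2 : ℝ) • (M *ᵥ v)) (mulAA2 G b c hG)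
  simp only [hcom] at h
  rw [← Matrix.mulVec_smul, e2, Matrix.mulVec_smul, hv] at h
  simp only [Matrix.add_mulVec, Matrix.smul_mulVec, hv] at h
  have := congrFun h x
  have e := A2v G b c hG v θ hv x
  simp only [Pi.add_apply, Pi.smul_apply, smul_eq_mul] at this
  linear_combination -this - aInt b c 2 * e

lemma qD_apply (G : SimpleGraph V) (b c : ℕ → ℕ) (hG : IsDRG G 3 b c) (q : ℝ) (hc : (c 2 : ℝ) ≠ 0)
    (v : V → ℝ) (θ j : ℝ)
    (hv : distM G 1 *ᵥ v = θ • v) (hj : ∀ x, ∑ y, v y = j * v x) :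
    qDist G 3 q *ᵥ v = ((1 + 1/q + (1/q)^2) * (j - 1) - (1/q + (1/q)^2) * θ -
      (1/q)^2 * ((θ ^ 2 - aInt b c 1 * θ - b 0) / c 2)) • v := by
  have e : qDist G 3 q = distM G 1 + (1 + 1/q) • distM G 2 + (1 + 1/q + (1/q)^2) • distM G 3 := by
    unfold qDist
    rw [show Finset.Icc 1 3 = {1, 2, 3} by decide]
    simp [Finset.sum_range_succ, add_assoc]
  ext x
  have s := congrFun (sumA G b c hG v) x
  have h2 := A2v G b c hG v θ hv x
  rw [hj x] at s
  rw [e]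
  simp only [Matrix.add_mulVec, Matrix.smul_mulVec, hv, Pi.add_apply, Pi.smul_apply,
    smul_eq_mul] at s ⊢
  have h2' : (distM G 2 *ᵥ v) x = ((θ ^ 2 - aInt b c 1 * θ - b 0) / c 2) * v x := by
    field_simp; linarith
  rw [h2'] at s ⊢
  linear_combination (1 + 1/q + (1/q)^2) * s

lemma qD_entry (G : SimpleGraph V) (q : ℝ) (hd : ∀ x y, G.dist x y ≤ 3)
    (hq' : 0 < q ∨ q ≤ -1) (x y : V) :
    0 ≤ qDist G 3 q x y ∧ (G.Adj x y → 0 < qDist G 3 q x y) := by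
  have e : qDist G 3 q = distM G 1 + (1 + 1/q) • distM G 2 + (1 + 1/q + (1/q)^2) • distM G 3 := by
    unfold qDist
    rw [show Finset.Icc 1 3 = {1, 2, 3} by decide]
    simp [Finset.sum_range_succ, add_assoc]
  have p1 : 0 ≤ 1 + 1/q := by
    rcases hq' with h | h
    · positivity
    · have : -1 ≤ 1/q := by
        rw [le_div_iff_of_neg (by linarith)]; linarith
      linarith
  have p2 : 0 ≤ 1 + 1/q + (1/q)^2 := by positivity
  rw [e, ← SimpleGraph.dist_eq_one_iff_adj]
  simp only [Matrix.add_apply, Matrix.smul_apply, distM, Matrix.of_apply, smul_eq_mul]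
  have := hd x y
  generalize G.dist x y = d at *
  interval_cases d <;> simp at p1 p2 ⊢ <;> assumption

lemma sum_zero (G : SimpleGraph V) (b c : ℕ → ℕ) (hG : IsDRG G 3 b c) (v : V → ℝ) (θ : ℝ)
    (hv : distM G 1 *ᵥ v = θ • v) (hθ : θ ≠ b 0) : ∑ y, v y = 0 := by
  have h := sum_mulVec G b c hG v
  rw [hv] at h
  simp only [Pi.smul_apply, smul_eq_mul, ← Finset.mul_sum] at h
  have : (θ - b 0) * ∑ y, v y = 0 := by linarith
  exact (mul_eq_zero.1 this).resolve_left (sub_ne_zero.2 hθ)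

lemma cubic (G : SimpleGraph V) (b c : ℕ → ℕ) (hG : IsDRG G 3 b c) (v : V → ℝ) (θ : ℝ)
    (hv0 : v ≠ 0) (hv : distM G 1 *ᵥ v = θ • v) (hθ : θ ≠ b 0) :
    (c 2 : ℝ) * c 3 * (1 + θ) + c 3 * (θ ^ 2 - aInt b c 1 * θ - b 0) +
      ((θ - aInt b c 2) * (θ ^ 2 - aInt b c 1 * θ - b 0) - b 1 * c 2 * θ) = 0 := by
  obtain ⟨x, hx⟩ := Function.ne_iff.1 hv0
  have s := congrFun (sumA G b c hG v) x
  rw [sum_zero G b c hG v θ hv hθ] at s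
  simp only [hv, Pi.add_apply, Pi.smul_apply, smul_eq_mul] at s
  have h2 := A2v G b c hG v θ hv x
  have h3 := A3v G b c hG v θ hv x
  apply mul_right_cancel₀ hx
  simp only [zero_mul, Pi.zero_apply]
  linear_combination (c 2 : ℝ) * c 3 * s - c 3 * h2 - h3

lemma cubic_sum (x y z p r s : ℝ) (hxy : x ≠ y) (hxz : x ≠ z) (hyz : y ≠ z)
    (hx : x ^ 3 + p * x ^ 2 + r * x + s = 0) (hy : y ^ 3 + p * y ^ 2 + r * y + s = 0)
    (hz : z ^ 3 + p * z ^ 2 + r * z + s = 0) : x + y + z = -p := by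
  have e1 : x^2 + x*y + y^2 + p * (x + y) + r = 0 := by
    apply mul_left_cancel₀ (sub_ne_zero.2 hxy); linear_combination hx - hy
  have e2 : x^2 + x*z + z^2 + p * (x + z) + r = 0 := by
    apply mul_left_cancel₀ (sub_ne_zero.2 hxz); linear_combination hx - hz
  have : x + y + z + p = 0 := by
    apply mul_left_cancel₀ (sub_ne_zero.2 hyz); linear_combination e1 - e2
  linarith

/-- main: symmetric form -/
lemma main_aux (G : SimpleGraph V) (b c : ℕ → ℕ) (hG : IsDRG G 3 b c)
    (t u w : ℝ) (ht : t ≠ b 0) (hu : u ≠ b 0) (hw : w ≠ b 0) (htu : t ≠ u) (htw : t ≠ w)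
    (huw : u ≠ w)
    (hspec : ∀ x, x ∈ spectrum ℝ (distM G 1) ↔ x = b 0 ∨ x = t ∨ x = u ∨ x = w)
    (q : ℝ) (hq : q = (t - aInt b c 3 + (b 2 : ℝ)) / (c 2 : ℝ))
    (hq' : 0 < q ∨ q ≤ -1) :
    (spectrum ℝ (qDist G 3 q)).ncard = 3 := by
  have hq0 : q ≠ 0 := by rcases hq' with h | h <;> intro h0 <;> linarith
  have hc2 : (c 2 : ℝ) ≠ 0 := by
    intro h; rw [h, div_zero] at hq; exact hq0 hq
  have hcon := hG.1
  have hb3 : (b 3 : ℝ) = 0 := by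
    obtain ⟨x, y, hxy⟩ := hG.2.2.1
    rw [← (nbr_bc G b c hG y x 3 hxy).2, nbr_eq]
    norm_cast
    rw [Set.ncard_eq_zero]
    ext z
    have := hG.2.1 x z
    simp; intro _; omega
  have hex : ∀ θ ∈ spectrum ℝ (distM G 1), ∃ v : V → ℝ, v ≠ 0 ∧ distM G 1 *ᵥ v = θ • v :=
    fun θ h => (mem_spec _ _).1 h
  obtain ⟨vt, vt0, hvt⟩ := hex t ((hspec t).2 (by simp))
  obtain ⟨vu, vu0, hvu⟩ := hex u ((hspec u).2 (by simp))
  obtain ⟨vw, vw0, hvw⟩ := hex w ((hspec w).2 (by simp))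
  have hsum : t + u + w = aInt b c 1 + aInt b c 2 - c 3 := by
    have := cubic_sum t u w (c 3 - aInt b c 1 - aInt b c 2)
      ((c 2 : ℝ) * c 3 - c 3 * aInt b c 1 + aInt b c 1 * aInt b c 2 - b 0 - b 1 * c 2)
      ((c 2 : ℝ) * c 3 - c 3 * b 0 + aInt b c 2 * b 0) htu htw huw
      (by linear_combination cubic G b c hG vt t vt0 hvt ht)
      (by linear_combination cubic G b c hG vu u vu0 hvu hu)
      (by linear_combination cubic G b c hG vw w vw0 hvw hw)
    linarith
  have hqc : c 2 * q = t - aInt b c 3 + (b 2 : ℝ) := by rw [hq]; field_simp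
  have huw' : u + w = aInt b c 1 - c 2 * (q + 1) := by
    have e3 : aInt b c 3 = b 0 - b 3 - c 3 := rfl
    have e2 : aInt b c 2 = b 0 - b 2 - c 2 := rfl
    linarith
  set f : ℝ → ℝ → ℝ := fun j θ => (1 + 1/q + (1/q)^2) * (j - 1) - (1/q + (1/q)^2) * θ -
      (1/q)^2 * ((θ ^ 2 - aInt b c 1 * θ - b 0) / c 2) with hf
  have hfd : ∀ x y, f 0 x - f 0 y =
      -((1/q)^2 / c 2) * ((x - y) * (x + y - (aInt b c 1 - c 2 * (q + 1)))) := by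
    intro x y; simp only [hf]; field_simp; ring
  have hfuw : f 0 u = f 0 w := by
    have := hfd u w; rw [huw'] at this; linarith
  have hne : -((1/q)^2 / (c 2 : ℝ)) ≠ 0 := by
    apply neg_ne_zero.2; positivity
  have hftu : f 0 t ≠ f 0 u := by
    intro h
    have := hfd t u
    rw [h, sub_self, ← huw'] at this
    have h' := (mul_eq_zero.1 ((mul_eq_zero.1 this.symm).resolve_left hne)).resolve_left
      (sub_ne_zero.2 htu)
    apply htw; linarith
  have hone : distM G 1 *ᵥ (fun _ => (1 : ℝ)) = (b 0 : ℝ) • fun _ => (1 : ℝ) := by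
    ext x
    have := A_one G b c hG x
    simpa [Matrix.mulVec, dotProduct] using this
  obtain ⟨n, hn⟩ : ∃ n : ℝ, n = (Fintype.card V : ℝ) := ⟨_, rfl⟩
  have hDone := qD_apply G b c hG q hc2 (fun _ => (1 : ℝ)) (b 0) n hone (by intro x; simp [hn])
  change _ = f n (b 0) • _ at hDone
  have hrow : ∀ x, ∑ y, qDist G 3 q x y = f n (b 0) := by
    intro x
    have := congrFun hDone x
    simpa [Matrix.mulVec, dotProduct] using this
  have hD0 : ∀ v : V → ℝ, ∀ θ : ℝ, θ ≠ b 0 → distM G 1 *ᵥ v = θ • v →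
      qDist G 3 q *ᵥ v = f 0 θ • v := by
    intro v θ hθ hv
    exact qD_apply G b c hG q hc2 v θ 0 hv
      (fun x => by rw [sum_zero G b c hG v θ hv hθ, zero_mul])
  have hrho : ∀ v : V → ℝ, v ≠ 0 → ∀ θ : ℝ, θ ≠ b 0 → distM G 1 *ᵥ v = θ • v →
      f n (b 0) ≠ f 0 θ := by
    intro v hv0 θ hθ hv h
    have hD := hD0 v θ hθ hv
    rw [← h] at hD
    obtain ⟨s, rfl⟩ := max_const G hcon _ _ (fun x y => (qD_entry G q hG.2.1 hq' x y).1)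
      (fun x y => (qD_entry G q hG.2.1 hq' x y).2) hrow v hD
    have hs := sum_zero G b c hG _ θ hv hθ
    haveI := hcon.nonempty
    simp at hs
    apply hv0
    ext x
    simp [hs]
  have hset : spectrum ℝ (qDist G 3 q) = {f n (b 0), f 0 t, f 0 u} := by
    apply Set.Subset.antisymm
    · apply spec_sub (distM G 1)
      · ext x y; simp [distM_symm G 1 x y]
      · intro x y
        unfold qDist
        simp only [Matrix.sum_apply, Matrix.smul_apply]
        exact Finset.sum_congr rfl fun i _ => by rw [distM_symm]
      · intro v hv0 θ hv
        rcases (hspec θ).1 ((mem_spec _ _).2 ⟨v, hv0, hv⟩) with rfl | rfl | rfl | rfl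
        · refine ⟨f n (b 0), by simp, ?_⟩
          obtain ⟨s, rfl⟩ := max_const G hcon (distM G 1) (b 0)
            (fun x y => by simp only [distM, Matrix.of_apply]; split_ifs <;> norm_num)
            (fun x y h => by simp [distM, SimpleGraph.dist_eq_one_iff_adj.2 h])
            (A_one G b c hG) v hv
          have : (fun _ : V => s) = s • fun _ => (1 : ℝ) := by ext; simp
          rw [this, Matrix.mulVec_smul, hDone, smul_comm]
        · exact ⟨_, by simp, hD0 v _ ht hv⟩
        · exact ⟨_, by simp, hD0 v _ hu hv⟩
        · exact ⟨_, by simp [hfuw], hD0 v _ hw hv⟩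
    · rintro m (rfl | rfl | rfl)
      · refine (mem_spec _ _).2 ⟨fun _ => 1, ?_, hDone⟩
        haveI := hcon.nonempty
        intro h
        have := congrFun h (Classical.arbitrary V)
        simp at this
      · exact (mem_spec _ _).2 ⟨vt, vt0, hD0 vt t ht hvt⟩
      · exact (mem_spec _ _).2 ⟨vu, vu0, hD0 vu u hu hvu⟩
  rw [hset, Set.ncard_eq_three]
  exact ⟨_, _, _, hrho vt vt0 t ht hvt, hrho vu vu0 u hu hvu, hftu, rfl⟩

/-- Corollary 3.6(iii): for a distance-regular graph of diameter 3 with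
intersection array `{k, b₁, b₂; 1, c₂, c₃}`, distinct adjacency eigenvalues
`k > θ₁ > θ₂ > θ₃`, and a real `q` with `q ∈ {q₁, q₂, q₃}` (where
`q_l = (θ_l − a₃ + b₂)/c₂`) and `q > 0` or `q ≤ −1`, the matrix `𝔻_q` has exactly three
distinct eigenvalues. -/
theorem stmt9 (G : SimpleGraph V) (b c : ℕ → ℕ) (hG : IsDRG G 3 b c)
    (θ₁ θ₂ θ₃ : ℝ) (h1 : (b 0 : ℝ) > θ₁) (h2 : θ₁ > θ₂) (h3 : θ₂ > θ₃)
    (hspec : spectrum ℝ (distM G 1) = ({(b 0 : ℝ), θ₁, θ₂, θ₃} : Set ℝ))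
    (q : ℝ)
    (hq : q ∈ ({(θ₁ - aInt b c 3 + (b 2 : ℝ)) / (c 2 : ℝ),
                (θ₂ - aInt b c 3 + (b 2 : ℝ)) / (c 2 : ℝ),
                (θ₃ - aInt b c 3 + (b 2 : ℝ)) / (c 2 : ℝ)} : Set ℝ))
    (hq' : 0 < q ∨ q ≤ -1) :
    (spectrum ℝ (qDist G 3 q)).ncard = 3 := by
  have n1 : θ₁ ≠ b 0 := h1.ne
  have n2 : θ₂ ≠ b 0 := (h2.trans h1).ne
  have n3 : θ₃ ≠ b 0 := (h3.trans (h2.trans h1)).ne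
  have m12 : θ₁ ≠ θ₂ := h2.ne'
  have m23 : θ₂ ≠ θ₃ := h3.ne'
  have m13 : θ₁ ≠ θ₃ := (h3.trans h2).ne'
  rcases hq with hq | hq | hq
  · exact main_aux G b c hG θ₁ θ₂ θ₃ n1 n2 n3 m12 m13 m23
      (fun x => by rw [hspec]; simp) q hq hq'
  · exact main_aux G b c hG θ₂ θ₁ θ₃ n2 n1 n3 m12.symm m23 m13
      (fun x => by rw [hspec]; simp; tauto) q hq hq'
  · exact main_aux G b c hG θ₃ θ₁ θ₂ n3 n1 n2 m13.symm m23.symm m12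
      (fun x => by rw [hspec]; simp; tauto) q hq hq'
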